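/- Change-of-base expansion with product-of-binomials coefficients: for integers 0 ≤ n ≤ k, all α, β, γ, δ ∈ ℂ such that every bracket appearing in a denominator is nonzero, and all z ∈ ℂ, one has [α+rz]_n[α−rz]_n[β+rz]_{k−n}[β−rz]_{k−n} = Σ_{m=0}^{k} R_n^m(α,β,γ,δ;k) · [γ+rz]_m[γ−rz]_m[δ+rz]_{k−m}[δ−rz]_{k−m}. -/

import Mathlib

noncomputable section

open Complex Finset

namespace Ell

/-- `x^s = exp(-iπ s /(r τ))`. -/
def xp (τ : ℂ) (r : ℝ) (s : ℂ) : ℂ :=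
  Complex.exp (-Complex.I * (Real.pi : ℂ) * s / ((r : ℂ) * τ))

/-- `Θ_p(z) = ∏_{j ≥ 0} (1 - z p^j)(1 - p^{j+1}/z)(1 - p^{j+1})`. -/
def Theta (p z : ℂ) : ℂ :=
  ∏' j : ℕ, ((1 - z * p ^ j) * (1 - p ^ (j + 1) / z) * (1 - p ^ (j + 1)))

/-- The bracket `[u] = x^{u²/r - u} Θ_p(x^{2u})` with `p = x^{2r}`. -/
def br (τ : ℂ) (r : ℝ) (u : ℂ) : ℂ :=
  xp τ r (u ^ 2 / (r : ℂ) - u) * Theta (xp τ r (2 * (r : ℂ))) (xp τ r (2 * u))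

/-- Elliptic shifted factorial `[u]_n = ∏_{j=0}^{n-1} [u+j]`. -/
def brF (τ : ℂ) (r : ℝ) (u : ℂ) (n : ℕ) : ℂ :=
  ∏ j ∈ Finset.range n, br τ r (u + (j : ℂ))

/-- Elliptic binomial coefficient `C_n^k(α,β,γ)`. -/
def Cnk (τ : ℂ) (r : ℝ) (k n : ℕ) (α β γ : ℂ) : ℂ :=
  brF τ r 1 k / (brF τ r 1 n * brF τ r 1 (k - n)) *
    (brF τ r (α - γ) n * brF τ r (α + γ + (k : ℂ) - (n : ℂ)) n *
      brF τ r (α - β) (k - n) * brF τ r (α + β + (n : ℂ)) (k - n)) /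
    (brF τ r (β - γ + (n : ℂ) - (k : ℂ)) n * brF τ r (γ - β - (n : ℂ)) (k - n) *
      brF τ r (β + γ) k)

/-- The elliptic 6j-symbol `R_n^m(α,β,γ,δ;k)`. -/
def Rnm (τ : ℂ) (r : ℝ) (k n m : ℕ) (α β γ δ : ℂ) : ℂ :=
  ∑ j ∈ Finset.range (min n m + 1),
    Cnk τ r n j α γ (β + (k : ℂ) - (n : ℂ)) * Cnk τ r (k - j) (m - j) β (γ + (j : ℂ)) δ

/-- Terminating very-well-poised elliptic hypergeometric sum with explicit
truncation `N`:  `Σ_{j=0}^N ([u₀+2j]/[u₀]) ([u₀]_j/[1]_j) ∏ᵢ [uᵢ]_j/[u₀+1-uᵢ]_j`. -/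
def Vsum (τ : ℂ) (r : ℝ) (u₀ : ℂ) (us : List ℂ) (N : ℕ) : ℂ :=
  ∑ j ∈ Finset.range (N + 1),
    br τ r (u₀ + 2 * (j : ℂ)) / br τ r u₀ * (brF τ r u₀ j / brF τ r 1 j) *
      (us.map fun ui => brF τ r ui j / brF τ r (u₀ + 1 - ui) j).prod

/-- "Every bracket appearing in a denominator of `C_n^k(·,β,γ)` is nonzero". -/
def CdenomNZ (τ : ℂ) (r : ℝ) (k n : ℕ) (β γ : ℂ) : Prop :=
  brF τ r 1 n ≠ 0 ∧ brF τ r 1 (k - n) ≠ 0 ∧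
    brF τ r (β - γ + (n : ℂ) - (k : ℂ)) n ≠ 0 ∧
    brF τ r (γ - β - (n : ℂ)) (k - n) ≠ 0 ∧ brF τ r (β + γ) k ≠ 0

/-- "Every bracket appearing in a denominator of `R_n^m(α,β,γ,δ;k)` is nonzero". -/
def RdenomNZ (τ : ℂ) (r : ℝ) (k n m : ℕ) (β γ δ : ℂ) : Prop :=
  ∀ j ≤ min n m,
    CdenomNZ τ r n j γ (β + (k : ℂ) - (n : ℂ)) ∧
      CdenomNZ τ r (k - j) (m - j) (γ + (j : ℂ)) δ

/-- Jacobi theta `ϑ₁(v|σ)`. -/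
def th1 (v σ : ℂ) : ℂ :=
  2 * Complex.exp (2 * (Real.pi : ℂ) * Complex.I * σ / 8) *
    (∏' n : ℕ, (1 - Complex.exp (2 * (Real.pi : ℂ) * Complex.I * σ) ^ (n + 1))) *
    Complex.sin ((Real.pi : ℂ) * v) *
    ∏' n : ℕ,
      (1 - 2 * Complex.exp (2 * (Real.pi : ℂ) * Complex.I * σ) ^ (n + 1) *
            Complex.cos (2 * (Real.pi : ℂ) * v) +
        Complex.exp (2 * (Real.pi : ℂ) * Complex.I * σ) ^ (2 * (n + 1)))

/-- Jacobi theta `ϑ₀(v|σ)`. -/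
def th0 (v σ : ℂ) : ℂ :=
  -Complex.I * Complex.exp ((Real.pi : ℂ) * Complex.I * (v + σ / 4)) * th1 (v + σ / 2) σ

/-- Jacobi theta `ϑ₂(v|σ)`. -/
def th2 (v σ : ℂ) : ℂ := th1 (v + 1 / 2) σ

/-- Jacobi theta `ϑ₃(v|σ)`. -/
def th3 (v σ : ℂ) : ℂ :=
  Complex.exp ((Real.pi : ℂ) * Complex.I * (v + σ / 4)) * th1 (v + (σ + 1) / 2) σ

/-- Intertwining vector component `ψ_ε(u)^a_b`, `ε ∈ {1, -1}`. -/
def psi (τ : ℂ) (r : ℝ) (u : ℂ) (ε : ℤ) (a b : ℤ) : ℂ :=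
  if ε = 1 then th0 ((((a : ℂ) - (b : ℂ)) * u + (a : ℂ)) / (2 * (r : ℂ))) (τ / 2)
  else th3 ((((a : ℂ) - (b : ℂ)) * u + (a : ℂ)) / (2 * (r : ℂ))) (τ / 2)

/-- The constant `C = x^{-r/4} e^{-iπ/4} τ^{1/2}`. -/
def Cc (τ : ℂ) (r : ℝ) : ℂ :=
  xp τ r (-(r : ℂ) / 4) * Complex.exp (-(Real.pi : ℂ) * Complex.I / 4) * τ ^ (1 / 2 : ℂ)

/-- Dual intertwining vector component `ψ*_ε(u)^a_b = -ε(a-b) C² ψ_{-ε}(u-1)^a_b/(2[b][u])`. -/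
def psiStar (τ : ℂ) (r : ℝ) (u : ℂ) (ε : ℤ) (a b : ℤ) : ℂ :=
  -(ε : ℂ) * ((a : ℂ) - (b : ℂ)) * Cc τ r ^ 2 * psi τ r (u - 1) (-ε) a b /
    (2 * br τ r (b : ℂ) * br τ r u)

/-- Sign attached to a boolean. -/
def sg (b : Bool) : ℤ := if b then 1 else -1

/-- Canonical path from `a`: up for `j ≤ n`, down afterwards. -/
def cpathZ (a n : ℤ) (j : ℕ) : ℤ := if (j : ℤ) ≤ n then a + j else a + 2 * n - j

/-- Admissibility: `a - b ∈ {-k, -k+2, …, k}`. -/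
def adm (k : ℕ) (a b : ℤ) : Prop := (a - b).natAbs ≤ k ∧ (a - b - (k : ℤ)) % 2 = 0

instance (k : ℕ) (a b : ℤ) : Decidable (adm k a b) := by unfold adm; infer_instance

/-- Fused intertwining vector component `ψ^{(k)}_μ(u)^a_b` (zero if `a,b` not admissible). -/
def psiF (τ : ℂ) (r : ℝ) (k : ℕ) (μ : ℤ) (u : ℂ) (a b : ℤ) : ℂ :=
  if adm k a b then
    ∑ ε ∈ Finset.univ.filter fun ε : Fin k → Bool => (∑ j, sg (ε j)) = μ,
      ∏ j : Fin k,
        psi τ r (u + (k : ℂ) - (((j : ℕ) + 1 : ℕ) : ℂ)) (sg (ε j))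
          (cpathZ a (((k : ℤ) - (a - b)) / 2) (j : ℕ))
          (cpathZ a (((k : ℤ) - (a - b)) / 2) ((j : ℕ) + 1))
  else 0

/-- Partial-sum path attached to a sign sequence `δ`, starting at `a`. -/
def spath (k : ℕ) (a : ℤ) (δ : Fin k → Bool) (j : ℕ) : ℤ :=
  a + ∑ i ∈ Finset.range j, if h : i < k then sg (δ ⟨i, h⟩) else 0

/-- Fused dual intertwining vector component `ψ*^{(k)}_μ(u)^b_a`
(sum over all admissible paths from `a` to `b`; zero if not admissible). -/
def psiStarF (τ : ℂ) (r : ℝ) (k : ℕ) (μ : ℤ) (u : ℂ) (b a : ℤ) : ℂ :=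
  if adm k a b then
    ∑ δ ∈ Finset.univ.filter fun δ : Fin k → Bool => (∑ j, sg (δ j)) = b - a,
      ∏ j : Fin k,
        psiStar τ r (u + (k : ℂ) - (((j : ℕ) + 1 : ℕ) : ℂ))
          (if ((j : ℕ) + 1 : ℤ) ≤ ((k : ℤ) + μ) / 2 then 1 else -1)
          (spath k a δ ((j : ℕ) + 1)) (spath k a δ (j : ℕ))
  else 0

/-- The `L`-matrix `L^{(k)}(a,b;c,d|u) = Σ_μ ψ*^{(k)}_μ(u)^d_c ψ^{(k)}_μ(u)^a_b`. -/
def Lk (τ : ℂ) (r : ℝ) (k : ℕ) (u : ℂ) (a b c d : ℤ) : ℂ :=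
  ∑ i ∈ Finset.range (k + 1),
    psiStarF τ r k ((k : ℤ) - 2 * (i : ℤ)) u d c * psiF τ r k ((k : ℤ) - 2 * (i : ℤ)) u a b

/-- Normalized face weight `W̄(a,b;d,c|u)` (arguments ordered (NW, NE; SW, SE)). -/
def Wb (τ : ℂ) (r : ℝ) (u : ℂ) (a b d c : ℤ) : ℂ :=
  if b = a + 1 ∧ d = a + 1 ∧ c = a + 2 then 1
  else if b = a - 1 ∧ d = a - 1 ∧ c = a - 2 then 1
  else if b = a + 1 ∧ d = a + 1 ∧ c = a then
    br τ r ((a : ℂ) - u) * br τ r 1 / (br τ r (a : ℂ) * br τ r (1 + u))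
  else if b = a - 1 ∧ d = a - 1 ∧ c = a then
    br τ r ((a : ℂ) + u) * br τ r 1 / (br τ r (a : ℂ) * br τ r (1 + u))
  else if b = a + 1 ∧ d = a - 1 ∧ c = a then
    br τ r ((a : ℂ) + 1) * br τ r u / (br τ r (a : ℂ) * br τ r (1 + u))
  else if b = a - 1 ∧ d = a + 1 ∧ c = a then
    br τ r ((a : ℂ) - 1) * br τ r u / (br τ r (a : ℂ) * br τ r (1 + u))
  else 0

/-- Sequence with prescribed endpoints `d`, `c` and free interior values `f`. -/
def seqI (k : ℕ) (d c : ℤ) (f : Fin (k - 1) → ℤ) (j : ℕ) : ℤ :=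
  if h0 : j = 0 then d
  else if hj : j < k then f ⟨j - 1, by omega⟩ else c

/-- Fused face weight `W^{(k,1)}(a,b;d,c|u)`. -/
def Wk1 (τ : ℂ) (r : ℝ) (k : ℕ) (u : ℂ) (a b d c : ℤ) : ℂ :=
  if adm k a b then
    ∑' f : Fin (k - 1) → ℤ,
      ∏ j ∈ Finset.range k,
        Wb τ r (u + (k : ℂ) - ((j : ℂ) + 1))
          (cpathZ a (((k : ℤ) - (a - b)) / 2) j)
          (cpathZ a (((k : ℤ) - (a - b)) / 2) (j + 1))
          (seqI k d c f j) (seqI k d c f (j + 1))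
  else 0

/-- Fused face weight `W^{(k,l)}(a,b;d,c|u)`. -/
def Wkl (τ : ℂ) (r : ℝ) (k l : ℕ) (u : ℂ) (a b d c : ℤ) : ℂ :=
  if adm l b c then
    ∑' g : Fin (l - 1) → ℤ,
      ∏ i ∈ Finset.range l,
        Wk1 τ r k (u - (l : ℂ) + ((i : ℂ) + 1))
          (seqI l a d g i) (cpathZ b (((l : ℤ) - (b - c)) / 2) i)
          (seqI l a d g (i + 1)) (cpathZ b (((l : ℤ) - (b - c)) / 2) (i + 1))
  else 0

/-- Eight-vertex weight `ā(u)`. -/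
def aw (τ : ℂ) (r : ℝ) (u : ℂ) : ℂ :=
  th2 (1 / (2 * (r : ℂ))) (τ / 2) * th2 (u / (2 * (r : ℂ))) (τ / 2) /
    (th2 0 (τ / 2) * th2 ((1 + u) / (2 * (r : ℂ))) (τ / 2))

/-- Eight-vertex weight `b̄(u)`. -/
def bw (τ : ℂ) (r : ℝ) (u : ℂ) : ℂ :=
  th2 (1 / (2 * (r : ℂ))) (τ / 2) * th1 (u / (2 * (r : ℂ))) (τ / 2) /
    (th2 0 (τ / 2) * th1 ((1 + u) / (2 * (r : ℂ))) (τ / 2))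

/-- Eight-vertex weight `c̄(u)`. -/
def cw (τ : ℂ) (r : ℝ) (u : ℂ) : ℂ :=
  th1 (1 / (2 * (r : ℂ))) (τ / 2) * th2 (u / (2 * (r : ℂ))) (τ / 2) /
    (th2 0 (τ / 2) * th1 ((1 + u) / (2 * (r : ℂ))) (τ / 2))

/-- Eight-vertex weight `d̄(u)`. -/
def dw (τ : ℂ) (r : ℝ) (u : ℂ) : ℂ :=
  -(th1 (1 / (2 * (r : ℂ))) (τ / 2) * th1 (u / (2 * (r : ℂ))) (τ / 2)) /
    (th2 0 (τ / 2) * th2 ((1 + u) / (2 * (r : ℂ))) (τ / 2))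

/-- The normalized eight-vertex `R`-matrix entry `R̄(u)_{(ε₁,ε₂),(ε₁',ε₂')}`. -/
def Rbar (τ : ℂ) (r : ℝ) (u : ℂ) (e1 e2 e1' e2' : ℤ) : ℂ :=
  if e1' = e1 ∧ e2' = e2 ∧ e1 = e2 then aw τ r u
  else if e1' = e1 ∧ e2' = e2 ∧ e1 = -e2 then bw τ r u
  else if e1' = e2 ∧ e2' = e1 ∧ e1 = -e2 then cw τ r u
  else if e1' = -e1 ∧ e2' = -e2 ∧ e1 = e2 then dw τ r u
  else 0

/-- Sklyanin standard-basis vector `v_+(z)`. -/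
def vp (τ z : ℂ) : ℂ := th3 (2 * z) (2 * τ) - th2 (2 * z) (2 * τ)

/-- Sklyanin standard-basis vector `v_-(z)`. -/
def vm (τ z : ℂ) : ℂ := th3 (2 * z) (2 * τ) + th2 (2 * z) (2 * τ)


lemma pascal_step (M : ℕ) (a b c u : ℕ → ℂ) (h0 : c 0 = b 0) (h1 : c (M+1) = a M)
    (h : ∀ i < M, c (i+1) = a i + b (i+1)) :
    ∑ i ∈ range (M+1), (a i * u (i+1) + b i * u i) = ∑ i ∈ range (M+1+1), c i * u i := by
  rw [sum_add_distrib, sum_range_succ (fun i => a i * u (i+1)), sum_range_succ' (fun i => b i * u i),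
    sum_range_succ, sum_range_succ' (fun i => c i * u i), h0, h1]
  have : ∑ i ∈ range M, c (i+1) * u (i+1) = ∑ i ∈ range M, a i * u (i+1) + ∑ i ∈ range M, b (i+1) * u (i+1) := by
    rw [← sum_add_distrib]
    refine sum_congr rfl fun i hi => ?_
    rw [h i (mem_range.1 hi)]; ring
  rw [this]; ring

def qF (p : ℂ) (m : ℕ) : ℂ := ∏ j ∈ range m, (1 - p ^ (j+1))

lemma qF_succ (p : ℂ) (m : ℕ) : qF p (m+1) = qF p m * (1 - p^(m+1)) := prod_range_succ _ _

lemma one_sub_pow_ne {p : ℂ} (hp : ‖p‖ < 1) (m : ℕ) : 1 - p^(m+1) ≠ 0 := by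
  intro h
  have h2 : ‖p^(m+1)‖ = 1 := by rw [← sub_eq_zero.1 h]; simp
  rw [norm_pow] at h2
  exact absurd h2 (pow_lt_one₀ (norm_nonneg _) hp (by simp)).ne

lemma qF_ne {p : ℂ} (hp : ‖p‖ < 1) (m : ℕ) : qF p m ≠ 0 :=
  prod_ne_zero_iff.2 fun j _ => one_sub_pow_ne hp j

lemma q_binom {p : ℂ} (hp : ‖p‖ < 1) (w : ℂ) (M : ℕ) :
    ∏ j ∈ range M, (1 + w * p ^ j) =
      ∑ i ∈ range (M+1), qF p M / (qF p i * qF p (M-i)) * p ^ (i.choose 2) * w ^ i := by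
  induction M with
  | zero => simp [qF]
  | succ M ih =>
    rw [prod_range_succ, ih, sum_mul]
    rw [← pascal_step M (fun i => qF p M / (qF p i * qF p (M-i)) * p ^ (i.choose 2) * p ^ M)
      (fun i => qF p M / (qF p i * qF p (M-i)) * p ^ (i.choose 2)) _ (fun i => w^i)]
    · refine sum_congr rfl fun i _ => ?_
      ring
    · have := qF_ne hp (M+1)
      have := qF_ne hp M
      simp [qF]
      rw [div_self, div_self]
      · exact this
      · assumption
    · have h1 := qF_ne hp M
      have h2 := qF_ne hp (M+1)
      simp only [Nat.sub_self]
      have : (M+1).choose 2 = M.choose 2 + M := by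
        rw [Nat.choose_succ_succ' M 1]; simp; ring
      rw [this, pow_add]
      simp [qF]
      rw [div_self, div_self]
      · ring
      · exact h1
      · exact h2
    · intro i hi
      obtain ⟨d, rfl⟩ : ∃ d, M = i + 1 + d := ⟨M - i - 1, by omega⟩
      have : (i+1).choose 2 = i.choose 2 + i := by
        rw [Nat.choose_succ_succ' i 1]; simp; ring
      rw [this, show i + 1 + d + 1 - (i+1) = d + 1 by omega, show i+1+d-i = d+1 by omega,
        show i+1+d-(i+1) = d by omega, qF_succ p (i+1+d), qF_succ p i, qF_succ p d]
      have h1 := qF_ne hp i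
      have h2 := qF_ne hp d
      have h3 := one_sub_pow_ne hp i
      have h4 := one_sub_pow_ne hp d
      field_simp
      ring

lemma exists_bd {p : ℂ} (hp : ‖p‖ < 1) : ∃ L : ℂ, L ≠ 0 ∧
    Filter.Tendsto (qF p) Filter.atTop (nhds L) := by
  have hs : Summable fun j : ℕ => ‖-p^(j+1)‖ := by
    simp only [norm_neg, norm_pow]
    exact (summable_nat_add_iff 1).2 (summable_geometric_of_lt_one (norm_nonneg _) hp)
  refine ⟨∏' j : ℕ, (1 + -p^(j+1)), ?_, ?_⟩
  · refine tprod_one_add_ne_zero_of_summable (fun j => ?_) hs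
    simpa [sub_eq_add_neg] using one_sub_pow_ne hp j
  · have := (multipliable_one_add_of_summable hs).hasProd.tendsto_prod_nat
    refine this.congr fun n => ?_
    simp [qF, sub_eq_add_neg]

lemma pref (σ v : ℂ) (N : ℕ) :
    ∏ j ∈ range N, (-(exp (2*Real.pi*I*σ)^(j+1) / exp (2*Real.pi*I*v))) =
      exp (-(Real.pi*I*N) + Real.pi*I*σ*N*(N+1) - 2*Real.pi*I*v*N) := by
  induction N with
  | zero => simp
  | succ N ih =>
    rw [prod_range_succ, ih, ← Complex.exp_nat_mul, ← Complex.exp_sub,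
      neg_eq_neg_one_mul (exp (_ - 2*Real.pi*I*v)),
      ← Complex.exp_neg_pi_mul_I, ← Complex.exp_add, ← Complex.exp_add]
    congr 1
    push_cast
    ring

lemma exp_split (σ v : ℂ) (N : ℕ) :
    ∏ j ∈ range N, ((1 - exp (2*Real.pi*I*v) * exp (2*Real.pi*I*σ)^j) *
      (1 - exp (2*Real.pi*I*σ)^(j+1) / exp (2*Real.pi*I*v))) =
    (∏ j ∈ range N, (-(exp (2*Real.pi*I*σ)^(j+1) / exp (2*Real.pi*I*v)))) *
    ∏ j ∈ range (2*N), (1 + (-(exp (2*Real.pi*I*v) * exp (-(2*Real.pi*I*σ*N)))) *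
      exp (2*Real.pi*I*σ)^j) := by
  have hp : exp (2*Real.pi*I*σ) ≠ 0 := Complex.exp_ne_zero _
  have hz : exp (2*Real.pi*I*v) ≠ 0 := Complex.exp_ne_zero _
  have hN : exp (-(2*Real.pi*I*σ*N)) = (exp (2*Real.pi*I*σ)^N)⁻¹ := by
    rw [Complex.exp_neg, ← Complex.exp_nat_mul]
    ring_nf
  rw [hN]
  generalize exp (2*Real.pi*I*σ) = p at *
  generalize exp (2*Real.pi*I*v) = z at *
  rw [two_mul, prod_range_add, prod_mul_distrib, mul_comm, ← mul_assoc]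
  congr 1
  · rw [← prod_range_reflect (fun j => 1 + -(z * (p^N)⁻¹) * p ^ j), ← prod_mul_distrib]
    refine prod_congr rfl fun j hj => ?_
    obtain ⟨d, rfl⟩ : ∃ d, N = j + 1 + d := ⟨N - j - 1, by have := mem_range.1 hj; omega⟩
    rw [show j + 1 + d - 1 - j = d by omega, pow_add p (j+1) d]
    field_simp
    ring
  · refine prod_congr rfl fun j hj => ?_
    rw [pow_add]
    field_simp
    ring

lemma finite_triple (σ v : ℂ) (hp : ‖exp (2*Real.pi*I*σ)‖ < 1) (N : ℕ) :
    ∏ j ∈ range N, ((1 - exp (2*Real.pi*I*v) * exp (2*Real.pi*I*σ)^j) *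
      (1 - exp (2*Real.pi*I*σ)^(j+1) / exp (2*Real.pi*I*v)) * (1 - exp (2*Real.pi*I*σ)^(j+1))) =
    ∑ i ∈ range (2*N+1), qF (exp (2*Real.pi*I*σ)) N *
      (qF (exp (2*Real.pi*I*σ)) (2*N) / (qF (exp (2*Real.pi*I*σ)) i *
        qF (exp (2*Real.pi*I*σ)) (2*N-i))) *
        jacobiTheta₂_term ((i:ℤ) - N) (v + 1/2 - σ/2) σ := by
  rw [prod_mul_distrib, exp_split, q_binom hp, pref, mul_comm, mul_sum, mul_sum]
  refine sum_congr rfl fun i _ => ?_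
  have key : exp (-(Real.pi*I*N) + Real.pi*I*σ*N*(N+1) - 2*Real.pi*I*v*N) *
      (exp (2*Real.pi*I*σ) ^ (i.choose 2) *
      (-(exp (2*Real.pi*I*v) * exp (-(2*Real.pi*I*σ*N)))) ^ i) =
      jacobiTheta₂_term ((i:ℤ) - N) (v + 1/2 - σ/2) σ := by
    rw [neg_eq_neg_one_mul (exp (2*Real.pi*I*v) * exp (-(2*Real.pi*I*σ*N))),
      ← Complex.exp_pi_mul_I,
      ← Complex.exp_add, ← Complex.exp_add, ← Complex.exp_nat_mul, ← Complex.exp_nat_mul,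
      ← Complex.exp_add, ← Complex.exp_add, jacobiTheta₂_term, Nat.cast_choose_two]
    congr 1
    push_cast
    ring
  rw [← key, ← qF]
  ring

lemma tsum_form (σ v : ℂ) (hp : ‖exp (2*Real.pi*I*σ)‖ < 1) (N : ℕ) :
    ∏ j ∈ range N, ((1 - exp (2*Real.pi*I*v) * exp (2*Real.pi*I*σ)^j) *
      (1 - exp (2*Real.pi*I*σ)^(j+1) / exp (2*Real.pi*I*v)) * (1 - exp (2*Real.pi*I*σ)^(j+1))) =
    ∑' n : ℤ, if n ∈ Finset.Icc (-(N:ℤ)) N then qF (exp (2*Real.pi*I*σ)) N *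
      (qF (exp (2*Real.pi*I*σ)) (2*N) / (qF (exp (2*Real.pi*I*σ)) (N+n).toNat *
        qF (exp (2*Real.pi*I*σ)) (N-n).toNat)) *
        jacobiTheta₂_term n (v + 1/2 - σ/2) σ else 0 := by
  rw [finite_triple σ v hp, tsum_eq_sum (s := Finset.Icc (-(N:ℤ)) N)]
  · refine sum_nbij' (fun i => (i:ℤ) - N) (fun n => (N+n).toNat) ?_ ?_ ?_ ?_ ?_
    · intro i hi; simp at hi ⊢; omega
    · intro i hi; simp at hi ⊢; omega
    · intro i hi; simp at hi ⊢
    · intro i hi; simp at hi ⊢; omega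
    · intro i hi
      rw [if_pos (by simp at hi ⊢; omega)]
      have h1 : ((N:ℤ) + ((i:ℤ) - N)).toNat = i := by omega
      have h2 : ((N:ℤ) - ((i:ℤ) - N)).toNat = 2*N - i := by omega
      rw [h1, h2]
  · intro n hn; rw [if_neg hn]

lemma bdd_of_tendsto {f : ℕ → ℂ} {L : ℂ} (h : Filter.Tendsto f Filter.atTop (nhds L)) :
    ∃ K : ℝ, 0 ≤ K ∧ ∀ n, ‖f n‖ ≤ K := by
  obtain ⟨K, hK⟩ := h.norm.bddAbove_range
  exact ⟨K, (norm_nonneg _).trans (hK ⟨0, rfl⟩), fun n => hK ⟨n, rfl⟩⟩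

lemma tendsto_form (σ v : ℂ) (hσ : 0 < σ.im) (hp : ‖exp (2*Real.pi*I*σ)‖ < 1) :
    Filter.Tendsto (fun N : ℕ => ∑' n : ℤ, if n ∈ Finset.Icc (-(N:ℤ)) N then
      qF (exp (2*Real.pi*I*σ)) N *
      (qF (exp (2*Real.pi*I*σ)) (2*N) / (qF (exp (2*Real.pi*I*σ)) (N+n).toNat *
        qF (exp (2*Real.pi*I*σ)) (N-n).toNat)) *
        jacobiTheta₂_term n (v + 1/2 - σ/2) σ else 0) Filter.atTop
      (nhds (∑' n : ℤ, jacobiTheta₂_term n (v + 1/2 - σ/2) σ)) := by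
  obtain ⟨L, hL, hT⟩ := exists_bd hp
  obtain ⟨K, hK0, hK⟩ := bdd_of_tendsto hT
  obtain ⟨K', hK0', hK'⟩ := bdd_of_tendsto (hT.inv₀ hL)
  have hs := (summable_jacobiTheta₂_term_iff (v + 1/2 - σ/2) σ).2 hσ
  refine tendsto_tsum_of_dominated_convergence
    (bound := fun n => (K * (K * (K' * K'))) * ‖jacobiTheta₂_term n (v + 1/2 - σ/2) σ‖)
    (hs.norm.mul_left _) ?_ ?_
  · intro n
    have e1 : Filter.Tendsto (fun N : ℕ => ((N:ℤ) + n).toNat) Filter.atTop Filter.atTop := by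
      refine Filter.tendsto_atTop.2 fun b => ?_
      filter_upwards [Filter.eventually_ge_atTop (b + n.natAbs)] with N hN
      omega
    have e2 : Filter.Tendsto (fun N : ℕ => ((N:ℤ) - n).toNat) Filter.atTop Filter.atTop := by
      refine Filter.tendsto_atTop.2 fun b => ?_
      filter_upwards [Filter.eventually_ge_atTop (b + n.natAbs)] with N hN
      omega
    have e3 : Filter.Tendsto (fun N : ℕ => 2 * N) Filter.atTop Filter.atTop := by
      refine Filter.tendsto_atTop.2 fun b => ?_
      filter_upwards [Filter.eventually_ge_atTop b] with N hN
      omega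
    have := (hT.mul ((hT.comp e3).div ((hT.comp e1).mul (hT.comp e2)) (mul_ne_zero hL hL))).mul_const
      (jacobiTheta₂_term n (v + 1/2 - σ/2) σ)
    rw [show L * (L / (L * L)) = 1 by field_simp, one_mul] at this
    refine this.congr' ?_
    filter_upwards [Filter.eventually_ge_atTop n.natAbs] with N hN
    rw [if_pos (by simp; omega)]
    rfl
  · refine Filter.Eventually.of_forall fun N n => ?_
    split_ifs
    · rw [norm_mul, norm_mul, div_eq_mul_inv, norm_mul, mul_inv, norm_mul]
      gcongr
      · exact hK _
      · exact hK _
      · exact hK' _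
      · exact hK' _
    · rw [norm_zero]; positivity

lemma multi (p z : ℂ) (hp : ‖p‖ < 1) : Multipliable
    (fun j : ℕ => ((1 - z * p ^ j) * (1 - p ^ (j + 1) / z) * (1 - p ^ (j + 1)))) := by
  have hg := summable_geometric_of_lt_one (norm_nonneg p) hp
  have hg1 := (summable_nat_add_iff 1).2 hg
  have m1 : Multipliable (fun j : ℕ => 1 + -(z * p ^ j)) := by
    apply multipliable_one_add_of_summable
    simpa using hg.mul_left ‖z‖
  have m2 : Multipliable (fun j : ℕ => 1 + -(p ^ (j+1) / z)) := by
    apply multipliable_one_add_of_summable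
    simpa using hg1.div_const ‖z‖
  have m3 : Multipliable (fun j : ℕ => 1 + -(p ^ (j+1))) := by
    apply multipliable_one_add_of_summable
    simpa using hg1
  simpa [sub_eq_add_neg] using (m1.mul m2).mul m3

lemma triple (σ v : ℂ) (hσ : 0 < σ.im) : Theta (exp (2*Real.pi*I*σ)) (exp (2*Real.pi*I*v)) =
    ∑' n : ℤ, jacobiTheta₂_term n (v + 1/2 - σ/2) σ := by
  have hp : ‖exp (2*Real.pi*I*σ)‖ < 1 := by
    rw [Complex.norm_exp, Real.exp_lt_one_iff]
    have : (2*Real.pi*I*σ).re = -(2*Real.pi*σ.im) := by simp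
    rw [this]
    have := Real.pi_pos
    have : 0 < 2*Real.pi*σ.im := by positivity
    linarith
  have h1 := (multi _ (exp (2*Real.pi*I*v)) hp).hasProd.tendsto_prod_nat
  refine tendsto_nhds_unique h1 ?_
  simp_rw [tsum_form σ v hp]
  exact tendsto_form σ v hσ hp

/-- Gaussian sum. -/
def gS (σ y : ℂ) : ℂ := ∑' a : ℤ, exp (2*Real.pi*I*σ*(y+a)^2)
def gT (σ y : ℂ) : ℂ := ∑' n : ℤ, exp (Real.pi*I*n + Real.pi*I*σ*(n+y-1/2)^2)

lemma summ_gS (σ y : ℂ) (hσ : 0 < σ.im) : Summable fun a : ℤ => exp (2*Real.pi*I*σ*(y+a)^2) := by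
  have := ((summable_jacobiTheta₂_term_iff (2*σ*y) (2*σ)).2 (by simpa using hσ)).mul_left
    (exp (2*Real.pi*I*σ*y^2))
  refine this.congr fun n => ?_
  rw [jacobiTheta₂_term, ← Complex.exp_add]
  congr 1; ring

lemma gT_eq (σ y : ℂ) (n : ℤ) : exp (Real.pi*I*n + Real.pi*I*σ*(n+y-1/2)^2) =
    exp (Real.pi*I*σ*(y-1/2)^2) * jacobiTheta₂_term n (σ*y + 1/2 - σ/2) σ := by
  rw [jacobiTheta₂_term, ← Complex.exp_add]
  congr 1; ring

lemma summ_gT (σ y : ℂ) (hσ : 0 < σ.im) :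
    Summable fun n : ℤ => exp (Real.pi*I*n + Real.pi*I*σ*(n+y-1/2)^2) := by
  simp_rw [gT_eq]
  exact ((summable_jacobiTheta₂_term_iff _ σ).2 hσ).mul_left _

lemma gT_neg (σ y : ℂ) : gT σ (-y) = - gT σ y := by
  rw [gT, gT, ← tsum_neg, ← (Equiv.subLeft (1:ℤ)).tsum_eq]
  refine tsum_congr fun n => ?_
  have h : (-1:ℂ) = exp (Real.pi*I - 2*n*(Real.pi*I)) := by
    rw [Complex.exp_sub, Complex.exp_pi_mul_I,
      show 2*(n:ℂ)*(Real.pi*I) = n * (2*Real.pi*I) by ring, Complex.exp_int_mul_two_pi_mul_I]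
    simp
  rw [neg_eq_neg_one_mul (exp _), h, ← Complex.exp_add]
  congr 1
  simp only [Equiv.subLeft_apply]
  push_cast
  ring

def eoMap : (ℤ × ℤ) ⊕ (ℤ × ℤ) → ℤ × ℤ :=
  Sum.elim (fun q => (q.1 + q.2, q.1 - q.2)) (fun q => (q.1 + q.2, q.1 - q.2 + 1))

lemma eoMap_bij : Function.Bijective eoMap := by
  constructor
  · rintro (⟨a, b⟩ | ⟨a, b⟩) (⟨c, d⟩ | ⟨c, d⟩) h <;> simp [eoMap] at h ⊢ <;> omega
  · rintro ⟨m, n⟩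
    rcases Int.even_or_odd' (m + n) with ⟨c, hc | hc⟩
    · exact ⟨Sum.inl (c, m - c), by simp [eoMap]; omega⟩
    · exact ⟨Sum.inr (c, m - c), by simp [eoMap]; omega⟩

lemma _root_.HasSum.congr_fun' {ι : Type*} {f g : ι → ℂ} {a : ℂ} (h : HasSum f a)
    (hfg : ∀ i, g i = f i) : HasSum g a := by
  rwa [show g = f from funext hfg]

lemma gT_mul (σ x z : ℂ) (hσ : 0 < σ.im) : gT σ (x+z) * gT σ (x-z) =
    gS σ (x - 1/2) * gS σ z - gS σ x * gS σ (z - 1/2) := by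
  have s1 := summ_gT σ (x+z) hσ
  have s2 := summ_gT σ (x-z) hσ
  have t1 := summ_gS σ (x-1/2) hσ
  have t2 := summ_gS σ z hσ
  have t3 := summ_gS σ x hσ
  have t4 := summ_gS σ (z-1/2) hσ
  rw [gT, gT, tsum_mul_tsum_of_summable_norm s1.norm s2.norm]
  simp only [gS]
  rw [tsum_mul_tsum_of_summable_norm t1.norm t2.norm, tsum_mul_tsum_of_summable_norm t3.norm t4.norm,
    ← (Equiv.ofBijective _ eoMap_bij).tsum_eq]
  have u1 := (summable_mul_of_summable_norm t1.norm t2.norm).hasSum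
  have u2 := (summable_mul_of_summable_norm t3.norm t4.norm).hasSum.neg
  refine (HasSum.tsum_eq (HasSum.sum (u1.congr_fun' ?_) (u2.congr_fun' ?_))).trans
    (sub_eq_add_neg _ _).symm
  · rintro ⟨a, b⟩
    have h := Complex.exp_int_mul_two_pi_mul_I a
    simp only [Function.comp, Equiv.ofBijective_apply, eoMap, Sum.elim_inl]
    rw [← Complex.exp_add, ← Complex.exp_add]
    refine Eq.trans (b := exp ((a:ℂ) * (2*Real.pi*I)) * _) ?_ (by rw [h, one_mul])
    rw [← Complex.exp_add]
    congr 1; push_cast; ring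
  · rintro ⟨a, b⟩
    have h := Complex.exp_int_mul_two_pi_mul_I a
    simp only [Function.comp, Equiv.ofBijective_apply, eoMap, Sum.elim_inr]
    rw [← Complex.exp_add, ← Complex.exp_add, neg_eq_neg_one_mul (exp _),
      ← Complex.exp_pi_mul_I, ← Complex.exp_add]
    refine Eq.trans (b := exp ((a:ℂ) * (2*Real.pi*I)) * _) ?_ (by rw [h, one_mul])
    rw [← Complex.exp_add]
    congr 1; push_cast; ring

lemma br_eq (τ : ℂ) (r : ℝ) (hτ : 0 < τ.im) (hr : 0 < r) (u : ℂ) :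
    br τ r u = exp (-(Real.pi*I*(-1/τ)/4)) * gT (-1/τ) (u/r) := by
  have hτ0 : τ ≠ 0 := by rintro rfl; simp at hτ
  have hr0 : (r:ℂ) ≠ 0 := by exact_mod_cast hr.ne'
  have hσ : 0 < (-1/τ).im := by
    rw [neg_div, one_div, neg_im, Complex.inv_im]
    have := Complex.normSq_pos.2 hτ0
    rw [neg_div, neg_neg]; positivity
  have h1 : xp τ r (2 * r) = exp (2*Real.pi*I*(-1/τ)) := by
    rw [xp]; congr 1; field_simp
  have h2 : xp τ r (2 * u) = exp (2*Real.pi*I*((-1/τ)*(u/r))) := by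
    rw [xp]; congr 1; field_simp
  rw [br, h1, h2, triple _ _ hσ, gT]
  simp_rw [gT_eq]
  rw [tsum_mul_left, ← mul_assoc, ← Complex.exp_add, xp]
  congr 2
  field_simp
  ring

lemma br_neg {τ : ℂ} {r : ℝ} (hτ : 0 < τ.im) (hr : 0 < r) (u : ℂ) : br τ r (-u) = - br τ r u := by
  rw [br_eq τ r hτ hr, br_eq τ r hτ hr, neg_div (r:ℂ) u, gT_neg]; ring

lemma br_three {τ : ℂ} {r : ℝ} (hτ : 0 < τ.im) (hr : 0 < r) (x y z w : ℂ) :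
    br τ r (x+y) * br τ r (x-y) * (br τ r (z+w) * br τ r (z-w)) -
    br τ r (x+z) * br τ r (x-z) * (br τ r (y+w) * br τ r (y-w)) +
    br τ r (x+w) * br τ r (x-w) * (br τ r (y+z) * br τ r (y-z)) = 0 := by
  have hτ0 : τ ≠ 0 := by rintro rfl; simp at hτ
  have hσ : 0 < (-1/τ).im := by
    rw [neg_div, one_div, neg_im, Complex.inv_im]
    have := Complex.normSq_pos.2 hτ0
    rw [neg_div, neg_neg]; positivity
  obtain ⟨f, g, c, h⟩ : ∃ (f g : ℂ → ℂ) (c : ℂ), ∀ x z,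
      br τ r (x+z) * br τ r (x-z) = c * (g x * f z - f x * g z) := by
    refine ⟨fun x => gS (-1/τ) (x/r), fun x => gS (-1/τ) (x/r-1/2),
      exp (-(Real.pi*I*(-1/τ)/4))^2, fun x z => ?_⟩
    rw [← gT_mul _ _ _ hσ, br_eq τ r hτ hr, br_eq τ r hτ hr, add_div, sub_div]
    ring
  simp only [h]
  ring

lemma brF_succ (τ : ℂ) (r : ℝ) (u : ℂ) (n : ℕ) :
    brF τ r u (n+1) = brF τ r u n * br τ r (u+n) := prod_range_succ _ _

lemma brF_succ' (τ : ℂ) (r : ℝ) (u : ℂ) (n : ℕ) :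
    brF τ r u (n+1) = br τ r u * brF τ r (u+1) n := by
  rw [brF, prod_range_succ', mul_comm, brF]
  congr 1
  · simp
  · refine prod_congr rfl fun j _ => ?_
    congr 1; push_cast; ring

lemma brF_add (τ : ℂ) (r : ℝ) (u : ℂ) (m n : ℕ) :
    brF τ r u (m+n) = brF τ r u m * brF τ r (u+m) n := by
  rw [brF, prod_range_add, brF, brF]
  congr 1
  refine prod_congr rfl fun j _ => ?_
  congr 1; push_cast; ring

lemma Cnk_add (τ : ℂ) (r : ℝ) (a b k : ℕ) (hk : k = a + b) (α β γ : ℂ) : Cnk τ r k a α β γ =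
    brF τ r 1 (a+b) / (brF τ r 1 a * brF τ r 1 b) *
    (brF τ r (α - γ) a * brF τ r (α + γ + b) a *
      brF τ r (α - β) b * brF τ r (α + β + a) b) /
    (brF τ r (β - γ - b) a * brF τ r (γ - β - a) b *
      brF τ r (β + γ) (a+b)) := by
  subst hk
  rw [Cnk, show a + b - a = b by omega,
    show α + γ + ((a+b:ℕ):ℂ) - (a:ℂ) = α + γ + b by push_cast; ring,
    show β - γ + (a:ℂ) - ((a+b:ℕ):ℂ) = β - γ - b by push_cast; ring]

lemma alg_rec (q0 qa qb sa sb sk n1 n2 n3 n4 t1 t2 t3 t4 t5 t6 t7 t8 d2 e3 y0 y1 y2 xa xb g h : ℂ)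
    (W : sk*t2*t4*y0 = sa*t5*t7*xa + sb*t6*t8*xb)
    (_ : qa ≠ 0) (_ : qb ≠ 0) (_ : sa ≠ 0) (_ : sb ≠ 0) (_ : d2 ≠ 0) (_ : e3 ≠ 0)
    (_ : y0 ≠ 0) (_ : y1 ≠ 0) (_ : y2 ≠ 0) (_ : xa ≠ 0) (_ : xb ≠ 0) (_ : g ≠ 0) (_ : h ≠ 0) :
    q0*sk/(qa*sa*(qb*sb)) * (n1*t1 * (n2*t2) * (n3*t3)*(n4*t4)) / (d2*y1 * (e3*(-y2)) * (g*h)) =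
    q0/(qa*(qb*sb)) * (n1 * n2 * (n3*t3) * (t5*n4)) / (d2 * (-(e3*y2*y0/xa)) * g) *
      (t7*t1/(h*y1)) +
    q0/((qa*sa)*qb) * ((n1*t1)*(t6*n2)*n3*n4)/((d2*y1*y0/xb)*e3*g) * (t8*t3/(h*(-y2))) := by
  field_simp
  linear_combination (-(q0*n1*t1*n2*n3*t3*n4)) * W

lemma Cnk_rec {τ : ℂ} {r : ℝ} (hτ : 0 < τ.im) (hr : 0 < r) (a b : ℕ) (α β γ : ℂ)
    (H1 : ∀ j < a + b + 2, br τ r (1 + (j:ℕ)) ≠ 0)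
    (H2 : ∀ j : ℤ, |j| < a + b + 2 → br τ r (β - γ + j) ≠ 0)
    (H3 : ∀ j < a + b + 2, br τ r (β + γ + (j:ℕ)) ≠ 0) :
    Cnk τ r (a+b+2) (a+1) α β γ =
    Cnk τ r (a+b+1) a α β γ * (br τ r (α + γ + a + 2*b + 2) * br τ r (α - γ + a) /
      (br τ r (β + γ + (a+b+1:ℕ)) * br τ r (β - γ + (a - b - 1 : ℤ)))) +
    Cnk τ r (a+b+1) (a+1) α β γ * (br τ r (α + β + 2*a + b + 2) * br τ r (α - β + b) /
      (br τ r (β + γ + (a+b+1:ℕ)) * (- br τ r (β - γ + (a - b + 1 : ℤ))))) := by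
  have F1 : ∀ m ≤ a+b+2, brF τ r 1 m ≠ 0 := fun m hm =>
    prod_ne_zero_iff.2 fun j hj => H1 j (by have := mem_range.1 hj; omega)
  have F3 : ∀ m ≤ a+b+2, brF τ r (β+γ) m ≠ 0 := fun m hm =>
    prod_ne_zero_iff.2 fun j hj => H3 j (by have := mem_range.1 hj; omega)
  have hd2 : brF τ r (β - γ - (b+1:ℕ)) a ≠ 0 := prod_ne_zero_iff.2 fun j hj => by
    have := mem_range.1 hj
    have h := H2 (j - b - 1) (by rw [abs_lt]; omega)
    convert h using 2; push_cast; ring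
  have he3 : brF τ r (γ - β - (a+1:ℕ)) b ≠ 0 := prod_ne_zero_iff.2 fun j hj => by
    have := mem_range.1 hj
    have h := H2 (a + 1 - j) (by rw [abs_lt]; omega)
    rw [← neg_ne_zero, ← br_neg hτ hr]
    convert h using 2; push_cast; ring
  have hy0 := H2 (a - b) (by rw [abs_lt]; omega)
  have hy1 := H2 (a - b - 1) (by rw [abs_lt]; omega)
  have hy2 := H2 (a - b + 1) (by rw [abs_lt]; omega)
  have hxa := H2 (a + 1) (by rw [abs_lt]; omega)
  have hxb := H2 (-b - 1) (by rw [abs_lt]; omega)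
  have D1 : brF τ r (β - γ - (b+1:ℕ)) (a+1) =
      brF τ r (β - γ - (b+1:ℕ)) a * br τ r (β - γ + (a - b - 1 : ℤ)) := by
    rw [brF_succ]; congr 2; push_cast; ring
  have D3 : brF τ r (β - γ - b) (a+1) =
      brF τ r (β - γ - (b+1:ℕ)) a * br τ r (β - γ + (a - b - 1 : ℤ)) *
        br τ r (β - γ + (a - b : ℤ)) / br τ r (β - γ + (-b - 1 : ℤ)) := by
    rw [eq_div_iff hxb, ← D1]
    have h1 := brF_succ τ r (β - γ - (b+1:ℕ)) (a+1)
    rw [brF_succ'] at h1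
    convert h1 using 1
    · rw [mul_comm]; congr 2
      · push_cast; ring
      · push_cast; ring
    · congr 2; push_cast; ring
  have E1 : brF τ r (γ - β - (a+1:ℕ)) (b+1) =
      brF τ r (γ - β - (a+1:ℕ)) b * (- br τ r (β - γ + (a - b + 1 : ℤ))) := by
    rw [brF_succ, ← br_neg hτ hr]; congr 2; push_cast; ring
  have E2 : brF τ r (γ - β - a) (b+1) =
      -(brF τ r (γ - β - (a+1:ℕ)) b * br τ r (β - γ + (a - b + 1 : ℤ)) *
        br τ r (β - γ + (a - b : ℤ)) / br τ r (β - γ + (a + 1 : ℤ))) := by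
    rw [← neg_div, eq_div_iff hxa]
    have h1 := brF_succ τ r (γ - β - (a+1:ℕ)) (b+1)
    rw [brF_succ', E1, show γ - β - ((a+1:ℕ):ℂ) = -(β - γ + (a + 1 : ℤ)) by push_cast; ring,
      br_neg hτ hr, show -(β - γ + ((a + 1 : ℤ):ℂ)) + ((b+1:ℕ):ℂ) = -(β - γ + (a - b : ℤ)) by push_cast; ring,
      br_neg hτ hr, show -(β - γ + ((a + 1 : ℤ):ℂ)) + 1 = γ - β - a by push_cast; ring] at h1
    rw [show γ - β - ((a+1:ℕ):ℂ) = -(β - γ + (a + 1 : ℤ)) by push_cast; ring]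
    linear_combination -h1
  have W := br_three hτ hr (α + (β+γ)/2 + a + b + 1) ((β-γ)/2) ((β-γ)/2 + a + 1) (b + 1 - (β-γ)/2)
  have key := alg_rec (brF τ r 1 (a+b+1)) (brF τ r 1 a) (brF τ r 1 b) (br τ r (1 + a)) (br τ r (1+b))
    (br τ r (1 + (a+b+1:ℕ))) (brF τ r (α-γ) a) (brF τ r (α+γ+(b+1:ℕ)) a) (brF τ r (α-β) b)
    (brF τ r (α+β+(a+1:ℕ)) b) (br τ r (α-γ+a)) (br τ r (α+γ+(b+1:ℕ)+a)) (br τ r (α-β+b))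
    (br τ r (α+β+(a+1:ℕ)+b)) (br τ r (α+β+a)) (br τ r (α+γ+b)) (br τ r (α + γ + a + 2*b + 2))
    (br τ r (α + β + 2*a + b + 2)) (brF τ r (β - γ - (b+1:ℕ)) a) (brF τ r (γ - β - (a+1:ℕ)) b)
    (br τ r (β - γ + (a - b : ℤ))) (br τ r (β - γ + (a - b - 1 : ℤ))) (br τ r (β - γ + (a - b + 1 : ℤ)))
    (br τ r (β - γ + (a + 1 : ℤ))) (br τ r (β - γ + (-b - 1 : ℤ))) (brF τ r (β+γ) (a+b+1))
    (br τ r (β + γ + (a+b+1:ℕ))) ?_ (F1 _ (by omega)) (F1 _ (by omega)) (H1 _ (by omega)) (H1 _ (by omega))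
    hd2 he3 hy0 hy1 hy2 hxa hxb (F3 _ (by omega)) (H3 _ (by omega))
  · rw [Cnk_add τ r (a+1) (b+1) (a+b+2) (by omega), Cnk_add τ r a (b+1) (a+b+1) (by omega),
      Cnk_add τ r (a+1) b (a+b+1) (by omega), D1, E1, E2, D3,
      show a + 1 + (b+1) = a+b+1+1 by omega, show a + (b+1) = a+b+1 by omega,
      show a+1+b = a+b+1 by omega, brF_succ τ r 1 (a+b+1), brF_succ τ r 1 a, brF_succ τ r 1 b,
      brF_succ τ r (α-γ) a, brF_succ τ r (α-β) b, brF_succ τ r (α+γ+(b+1:ℕ)) a,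
      brF_succ τ r (α+β+(a+1:ℕ)) b, brF_succ' τ r (α+γ+b) a, brF_succ' τ r (α+β+a) b,
      brF_succ τ r (β+γ) (a+b+1),
      show α + γ + (b:ℂ) + 1 = α+γ+(b+1:ℕ) by push_cast; ring,
      show α + β + (a:ℂ) + 1 = α+β+(a+1:ℕ) by push_cast; ring]
    exact key
  · have n1 : br τ r ((β-γ)/2 - ((β-γ)/2 + a + 1)) = - br τ r (1 + a) := by
      rw [← br_neg hτ hr]; congr 1; ring
    rw [n1] at W
    push_cast
    ring_nf at W ⊢
    linear_combination W

lemma binom {τ : ℂ} {r : ℝ} (hτ : 0 < τ.im) (hr : 0 < r) (k : ℕ) (α β γ z : ℂ)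
    (H1 : ∀ j < k, br τ r (1 + (j:ℕ)) ≠ 0)
    (H2 : ∀ j : ℤ, |j| < k → br τ r (β - γ + j) ≠ 0)
    (H3 : ∀ j < k, br τ r (β + γ + (j:ℕ)) ≠ 0) :
    brF τ r (α + z) k * brF τ r (α - z) k = ∑ n ∈ range (k+1), Cnk τ r k n α β γ *
      (brF τ r (β + z) n * brF τ r (β - z) n * brF τ r (γ + z) (k-n) * brF τ r (γ - z) (k-n)) := by
  induction k with
  | zero => simp [brF, Cnk]
  | succ k ih =>
    have F1 : ∀ m ≤ k + 1, brF τ r 1 m ≠ 0 := fun m hm =>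
      prod_ne_zero_iff.2 fun j hj => H1 j (by have := mem_range.1 hj; omega)
    rw [brF_succ, brF_succ, mul_mul_mul_comm, ih (fun j hj => H1 j (by omega))
      (fun j hj => H2 j (by push_cast; omega)) (fun j hj => H3 j (by omega)), sum_mul]
    rw [← pascal_step k
      (fun i => Cnk τ r k i α β γ * (br τ r (α + γ + 2*k - i) * br τ r (α - γ + i) /
        (br τ r (β + γ + k) * br τ r (β - γ + (2*i-k : ℤ)))))
      (fun i => Cnk τ r k i α β γ * (br τ r (α + β + k + i) * br τ r (α - β + k - i) /
        (br τ r (β + γ + k) * (-br τ r (β - γ + (2*i-k : ℤ))))))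
      _ (fun n => brF τ r (β + z) n * brF τ r (β - z) n * brF τ r (γ + z) (k+1-n) *
        brF τ r (γ - z) (k+1-n))]
    · refine sum_congr rfl fun i hi => ?_
      have hi : i ≤ k := by have := mem_range.1 hi; omega
      obtain ⟨d, rfl⟩ : ∃ d, k = i + d := ⟨k - i, by omega⟩
      have h2 := H2 (2*i-(i+d:ℕ)) (by rw [abs_lt]; push_cast; omega)
      have h3 := H3 (i+d) (by omega)
      rw [show i + d + 1 - (i+1) = d by omega, show i + d + 1 - i = d + 1 by omega,
        show i + d - i = d by omega, brF_succ, brF_succ, brF_succ, brF_succ]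
      have W := br_three hτ hr (α + i + d) (β + i) (γ + d) z
      have key : br τ r (α + z + (i+d:ℕ)) * br τ r (α - z + (i+d:ℕ)) =
        (br τ r (α + γ + 2*(i+d:ℕ) - i) * br τ r (α - γ + i) /
        (br τ r (β + γ + (i+d:ℕ)) * br τ r (β - γ + (2*i-(i+d:ℕ) : ℤ)))) *
          (br τ r (β + z + i) * br τ r (β - z + i)) +
        (br τ r (α + β + (i+d:ℕ) + i) * br τ r (α - β + (i+d:ℕ) - i) /
        (br τ r (β + γ + (i+d:ℕ)) * (-br τ r (β - γ + (2*i-(i+d:ℕ) : ℤ))))) *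
          (br τ r (γ + z + d) * br τ r (γ - z + d)) := by
        field_simp
        push_cast at *
        ring_nf at W ⊢
        linear_combination W
      rw [key]
      ring
    · rw [Cnk_add τ r 0 (k+1) (k+1) (by omega), Cnk_add τ r 0 k k (by omega)]
      have e : br τ r (γ - β + k) = - br τ r (β - γ + (2*(0:ℕ)-k:ℤ)) := by
        rw [← br_neg hτ hr]; congr 1; push_cast; ring
      have f1 := F1 k (by omega)
      have f2 := F1 (k+1) (by omega)
      simp only [zero_add, brF_succ τ r (α - β), brF_succ τ r (α+β+(0:ℕ)), brF_succ τ r (γ-β-(0:ℕ)),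
        brF_succ τ r (β+γ)]
      have z0 : ∀ u, brF τ r u 0 = 1 := fun u => by simp [brF]
      simp only [z0, one_mul, Nat.cast_zero, add_zero, sub_zero, div_self f1, div_self f2, e]
      rw [div_mul_div_comm]
      congr 1
      · ring
      · ring
    · rw [Cnk_add τ r (k+1) 0 (k+1) (by omega), Cnk_add τ r k 0 k (by omega)]
      have e : ((2*k-k:ℤ):ℂ) = k := by push_cast; ring
      have f1 := F1 k (by omega)
      have f2 := F1 (k+1) (by omega)
      have z0 : ∀ u, brF τ r u 0 = 1 := fun u => by simp [brF]
      simp only [z0, mul_one, Nat.cast_zero, add_zero, sub_zero, div_self f1, div_self f2, one_mul, e,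
        brF_succ τ r (α - γ), brF_succ τ r (α+γ), brF_succ τ r (β-γ), brF_succ τ r (β+γ)]
      rw [div_mul_div_comm, show α + γ + 2*(k:ℂ) - k = α + γ + k by ring]
      congr 1
      · ring
      · ring
    · intro i hi
      obtain ⟨d, rfl⟩ : ∃ d, k = i + d + 1 := ⟨k - i - 1, by omega⟩
      have := Cnk_rec hτ hr i d α β γ (fun j hj => H1 j (by omega))
        (fun j hj => H2 j (by push_cast; omega)) (fun j hj => H3 j (by omega))
      have a1 : α+γ+2*((i+d+1:ℕ):ℂ)-(i:ℂ) = α+γ+i+2*d+2 := by push_cast; ring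
      have a2 : ((2*(i:ℤ)-((i+d+1:ℕ):ℤ) : ℤ):ℂ) = ((i-d-1:ℤ):ℂ) := by push_cast; ring
      have a3 : α+β+((i+d+1:ℕ):ℂ)+((i+1:ℕ):ℂ) = α+β+2*i+d+2 := by push_cast; ring
      have a4 : α-β+((i+d+1:ℕ):ℂ)-((i+1:ℕ):ℂ) = α-β+d := by push_cast; ring
      have a5 : ((2*((i+1:ℕ):ℤ)-((i+d+1:ℕ):ℤ) : ℤ):ℂ) = ((i-d+1:ℤ):ℂ) := by push_cast; ring
      have a6 : β+γ+((i+d+1:ℕ):ℂ) = β+γ+i+d+1 := by push_cast; ring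
      rw [show i + d + 1 + 1 = i + d + 2 by omega, this]
      simp only [a1, a2, a3, a4, a5]

lemma binom' {τ : ℂ} {r : ℝ} (hτ : 0 < τ.im) (hr : 0 < r) (k : ℕ) (α β γ z : ℂ)
    (h : ∀ n ≤ k, CdenomNZ τ r k n β γ) :
    brF τ r (α + z) k * brF τ r (α - z) k = ∑ n ∈ range (k+1), Cnk τ r k n α β γ *
      (brF τ r (β + z) n * brF τ r (β - z) n * brF τ r (γ + z) (k-n) * brF τ r (γ - z) (k-n)) := by
  obtain ⟨h1, -, h2, -, h3⟩ := h k le_rfl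
  obtain ⟨-, -, -, h4, -⟩ := h 0 (Nat.zero_le _)
  rw [brF, prod_ne_zero_iff] at h1 h2 h3 h4
  refine binom hτ hr k α β γ z (fun j hj => h1 j (mem_range.2 hj)) (fun j hj => ?_)
    (fun j hj => h3 j (mem_range.2 hj))
  rw [abs_lt] at hj
  rcases le_total 0 j with h0 | h0
  · obtain ⟨i, rfl⟩ := Int.eq_ofNat_of_zero_le h0
    have := h2 i (mem_range.2 (by omega))
    convert this using 2
    push_cast; ring
  · obtain ⟨i, rfl⟩ := Int.exists_eq_neg_ofNat h0
    have := h4 i (mem_range.2 (by omega))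
    rw [← neg_ne_zero, ← br_neg hτ hr]
    convert this using 2
    push_cast; ring

/-- Change-of-base expansion with product-of-binomials coefficients. -/
theorem change_of_base_Rnm (τ : ℂ) (r : ℝ) (hτ : 0 < τ.im) (hr : 0 < r)
    (k n : ℕ) (hn : n ≤ k) (α β γ δ z : ℂ)
    (hd : ∀ m ≤ k, RdenomNZ τ r k n m β γ δ) :
    brF τ r (α + (r : ℂ) * z) n * brF τ r (α - (r : ℂ) * z) n *
        brF τ r (β + (r : ℂ) * z) (k - n) * brF τ r (β - (r : ℂ) * z) (k - n) =
      ∑ m ∈ Finset.range (k + 1),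
        Rnm τ r k n m α β γ δ *
          (brF τ r (γ + (r : ℂ) * z) m * brF τ r (γ - (r : ℂ) * z) m *
            brF τ r (δ + (r : ℂ) * z) (k - m) * brF τ r (δ - (r : ℂ) * z) (k - m)) := by
  have hk : ∀ j ≤ n, CdenomNZ τ r n j γ (β + (k : ℂ) - (n : ℂ)) := fun j hj =>
    (hd k le_rfl j (by simp; omega)).1
  have hk2 : ∀ j ≤ n, ∀ i ≤ k - j, CdenomNZ τ r (k - j) i (γ + (j : ℂ)) δ := fun j hj i hi => by
    have := (hd (i + j) (by omega) j (by simp; omega)).2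
    rwa [Nat.add_sub_cancel] at this
  rw [binom' hτ hr n α γ (β + (k:ℂ) - (n:ℂ)) (r*z) hk, sum_mul, sum_mul]
  have step : ∀ j ∈ range (n+1),
      Cnk τ r n j α γ (β + (k:ℂ) - (n:ℂ)) * (brF τ r (γ + r*z) j * brF τ r (γ - r*z) j *
        brF τ r (β + (k:ℂ) - (n:ℂ) + r*z) (n-j) * brF τ r (β + (k:ℂ) - (n:ℂ) - r*z) (n-j)) *
        brF τ r (β + r * z) (k - n) * brF τ r (β - r * z) (k - n) =
      ∑ m ∈ range (k+1), if j ≤ m then Cnk τ r n j α γ (β + (k : ℂ) - (n : ℂ)) *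
        Cnk τ r (k - j) (m - j) β (γ + (j : ℂ)) δ * (brF τ r (γ + (r : ℂ) * z) m * brF τ r (γ - (r : ℂ) * z) m *
            brF τ r (δ + (r : ℂ) * z) (k - m) * brF τ r (δ - (r : ℂ) * z) (k - m)) else 0 := by
    intro j hj
    have hj : j ≤ n := by have := mem_range.1 hj; omega
    have e1 : brF τ r (β + r * z) (k - n) * brF τ r (β + (k:ℂ) - (n:ℂ) + r*z) (n-j) =
        brF τ r (β + r * z) (k - j) := by
      rw [show k - j = (k - n) + (n - j) by omega, brF_add, Nat.cast_sub hn]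
      congr 2; ring
    have e2 : brF τ r (β - r * z) (k - n) * brF τ r (β + (k:ℂ) - (n:ℂ) - r*z) (n-j) =
        brF τ r (β - r * z) (k - j) := by
      rw [show k - j = (k - n) + (n - j) by omega, brF_add, Nat.cast_sub hn]
      congr 2; ring
    have e3 := binom' hτ hr (k-j) β (γ + (j:ℂ)) δ (r*z) (hk2 j hj)
    calc _ = Cnk τ r n j α γ (β + (k:ℂ) - (n:ℂ)) * (brF τ r (γ + r*z) j * brF τ r (γ - r*z) j) *
          ((brF τ r (β + r * z) (k - n) * brF τ r (β + (k:ℂ) - (n:ℂ) + r*z) (n-j)) *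
           (brF τ r (β - r * z) (k - n) * brF τ r (β + (k:ℂ) - (n:ℂ) - r*z) (n-j))) := by ring
      _ = _ := by
        rw [e1, e2, e3, mul_sum, show k + 1 = j + (k - j + 1) by omega, sum_range_add _ j (k - j + 1)]
        rw [sum_eq_zero (s := range j), zero_add]
        · refine sum_congr rfl fun i hi => ?_
          rw [if_pos (by omega), brF_add, brF_add, show j + i - j = i by omega,
            show k - (j + i) = k - j - i by omega,
            show γ + r * z + (j:ℂ) = γ + j + r * z by ring,
            show γ - r * z + (j:ℂ) = γ + j - r * z by ring]
          ring
        · intro m hm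
          rw [if_neg (by have := mem_range.1 hm; omega)]
  rw [sum_congr rfl step, sum_comm]
  refine sum_congr rfl fun m hm => ?_
  rw [Rnm, sum_mul, ← sum_filter]
  refine sum_congr ?_ fun _ _ => rfl
  ext j
  simp

end Ell
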